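/- arXiv:1911.04590 — 3 statements merged into one kernel-verified Lean document; each statement's English description precedes it below -/
import Mathlib

section
/- (Proposition on extension to centralizer subalgebras, Morita-equivalence form.) Under the hypotheses in the context, the block algebras C := MonoidAlgebra k (N·C_G(N)) ⧸ I(1−b) and C' := MonoidAlgebra k (N'·C_G(N)) ⧸ I(1−b') (where b, b' are regarded in these group algebras via the inclusions N ≤ N·C_G(N) and N' ≤ N'·C_G(N)) are Morita equivalent (IsMoritaEquivalent). This is the ungraded content of the C̄_G(N)-graded Morita equivalence between C = b·k[N·C_G(N)] and C' = b'·k[N'·C_G(N)] induced by C ⊗_B M. -/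
open scoped TensorProduct
open MonoidAlgebra

noncomputable section

/-- The block algebra: the quotient of `R` by the two-sided ideal generated by `1 - e`. -/
abbrev BlockQuot {R : Type} [Ring R] (e : R) : Type :=
  (TwoSidedIdeal.span {1 - e}).ringCon.Quotient

/-- The canonical projection onto the block algebra. -/
def blockPi {R : Type} [Ring R] (e : R) : R →+* BlockQuot e where
  toFun r := ((r : R) : (TwoSidedIdeal.span {1 - e}).ringCon.Quotient)
  map_one' := RingCon.coe_one _
  map_mul' := RingCon.coe_mul _
  map_zero' := RingCon.coe_zero _
  map_add' := RingCon.coe_add _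

instance blockAlgebra {k R : Type} [CommRing k] [Ring R] [Algebra k R] (e : R) :
    Algebra k (BlockQuot e) :=
  RingHom.toAlgebra' ((blockPi e).comp (algebraMap k R)) (by
    intro c x
    induction x using Quotient.inductionOn' with
    | h r =>
      show ((algebraMap k R c : R) : BlockQuot e) * ↑r = ↑r * ↑(algebraMap k R c)
      rw [← RingCon.coe_mul, ← RingCon.coe_mul, Algebra.commutes])

/-- `M` induces a Morita equivalence between `B` and `B'`: it is a finitely generated
projective generator as a left `B`-module and the right `B'`-action gives a ring
isomorphism of `B'ᵐᵒᵖ` onto `End_B(M)`. -/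
def InducesMorita (k : Type) [CommRing k] (B B' : Type) [Ring B] [Ring B']
    [Algebra k B] [Algebra k B'] (M : Type) [AddCommGroup M]
    [Module (B ⊗[k] B'ᵐᵒᵖ) M] : Prop :=
  letI : Module B M :=
    Module.compHom M (Algebra.TensorProduct.includeLeftRingHom : B →+* B ⊗[k] B'ᵐᵒᵖ)
  Module.Finite B M ∧ Module.Projective B M ∧
    (∃ (n : ℕ) (f : (Fin n → M) →ₗ[B] B), Function.Surjective f) ∧
    ∃ φ : B'ᵐᵒᵖ →+* Module.End B M,
      Function.Bijective φ ∧ ∀ (β' : B'ᵐᵒᵖ) (m : M), φ β' m = ((1 : B) ⊗ₜ[k] β') • m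

/-- Morita equivalence of rings: an equivalence between the module categories. -/
def IsMoritaEquivalentRing (R S : Type) [Ring R] [Ring S] : Prop :=
  Nonempty (ModuleCat.{0} R ≌ ModuleCat.{0} S)

/-!
Write `C_G(N)` as `Γ` and `N ∩ Γ` as `Z`. The group algebra of `NΓ` is generated by `kN` and `Γ`,
subject only to `Γ` commuting with `kN` and to the two copies of `Z` being identified; this
survives the passage to the blocks. Hence a module over the block of `NΓ` is a `B`-module with a
commuting action of `Γ` in which `Z` acts through `B`, and similarly for `N'`.

The functor `Hom_B(M, -)` is an equivalence from `B`-modules to `B'`-modules, so it carries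
`Γ`-actions to `Γ`-actions. Because `z • m = m • z` on `M`, it preserves the condition on `Z`, and
because `M` is a generator it also reflects it.
-/

open CategoryTheory MulOpposite

universe v

section HomModule

section

variable {R S P X : Type*} [Ring R] [Ring S] [AddCommGroup P] [Module R P] [Module Sᵐᵒᵖ P]
  [SMulCommClass Sᵐᵒᵖ R P] [AddCommGroup X] [Module R X]

/-- The left `S`-module structure `(s • f) p = f (p • s)` on `Hom_R(P, X)` for an
`(R, S)`-bimodule `P`. It is only a local instance, since for commutative `S` it could compete with
the pointwise action on `X`. -/
abbrev homModule : Module S (P →ₗ[R] X) where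
  smul s f := f ∘ₗ Module.toModuleEnd R P (op s)
  one_smul f := LinearMap.ext fun p ↦ congrArg f (one_smul Sᵐᵒᵖ p)
  mul_smul s t f := LinearMap.ext fun p ↦ congrArg f (mul_smul (op t) (op s) p)
  smul_zero _ := rfl
  smul_add _ _ _ := rfl
  add_smul s t f := LinearMap.ext fun p ↦
    (congrArg f (add_smul (op s) (op t) p)).trans (map_add f _ _)
  zero_smul f := LinearMap.ext fun p ↦ (congrArg f (zero_smul Sᵐᵒᵖ p)).trans (map_zero f)

attribute [local instance] homModule

theorem homModule_smul_apply (s : S) (f : P →ₗ[R] X) (p : P) : (s • f) p = f (op s • p) := rfl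

theorem smulCommClass_homModule {T : Type*} [Ring T] [Module T X] [SMulCommClass R T X] :
    SMulCommClass T S (P →ₗ[R] X) :=
  ⟨fun _ _ _ ↦ rfl⟩

end

attribute [local instance] homModule smulCommClass_homModule

/-- The functor `Hom_R(P, -)` from `R`-modules to `S`-modules given by an `(R, S)`-bimodule `P`. -/
def homFunctor (R S : Type*) [Ring R] [Ring S] (P : Type v) [AddCommGroup P] [Module R P]
    [Module Sᵐᵒᵖ P] [SMulCommClass Sᵐᵒᵖ R P] : ModuleCat.{v} R ⥤ ModuleCat.{v} S where
  obj X := ModuleCat.of S (P →ₗ[R] X)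
  map u := ModuleCat.ofHom
    { toFun := u.hom.comp
      map_add' := fun f g ↦ LinearMap.comp_add f g u.hom
      map_smul' := fun _ _ ↦ rfl }

/-- A Morita context between `R` and `S` with both pairings surjective: bimodules `P` and `Q` with
associative balanced pairings `P ⊗_S Q → R` and `Q ⊗_R P → S`. The pairings are encoded as
biadditive maps, and surjectivity as `1` being a finite sum of values; right actions are left
actions of the opposite rings. -/
structure StrictMoritaContext (R S P Q : Type*) [Ring R] [Ring S] [AddCommGroup P] [AddCommGroup Q]
    [Module R P] [Module Sᵐᵒᵖ P] [Module S Q] [Module Rᵐᵒᵖ Q] where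
  toLeft : P →+ Q →+ R
  toRight : Q →+ P →+ S
  toLeft_smul_left : ∀ (r : R) p q, toLeft (r • p) q = r * toLeft p q
  toLeft_smul_right : ∀ (r : R) p q, toLeft p (op r • q) = toLeft p q * r
  toLeft_balanced : ∀ (s : S) p q, toLeft (op s • p) q = toLeft p (s • q)
  toRight_smul_left : ∀ (s : S) q p, toRight (s • q) p = s * toRight q p
  toRight_smul_right : ∀ (s : S) q p, toRight q (op s • p) = toRight q p * s
  toRight_balanced : ∀ (r : R) q p, toRight (op r • q) p = toRight q (r • p)
  toLeft_smul : ∀ p q p', toLeft p q • p' = op (toRight q p') • p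
  toRight_smul : ∀ q p q', toRight q p • q' = op (toLeft p q') • q
  exists_sum_toLeft : ∃ (n : ℕ) (x : Fin n → P) (y : Fin n → Q), ∑ t, toLeft (x t) (y t) = 1
  exists_sum_toRight : ∃ (n : ℕ) (y : Fin n → Q) (x : Fin n → P), ∑ t, toRight (y t) (x t) = 1

namespace StrictMoritaContext

/-- The Morita context with the roles of the two rings exchanged. -/
def symm {R S P Q : Type*} [Ring R] [Ring S] [AddCommGroup P] [AddCommGroup Q]
    [Module R P] [Module Sᵐᵒᵖ P] [Module S Q] [Module Rᵐᵒᵖ Q]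
    (W : StrictMoritaContext R S P Q) : StrictMoritaContext S R Q P where
  toLeft := W.toRight
  toRight := W.toLeft
  toLeft_smul_left := W.toRight_smul_left
  toLeft_smul_right := W.toRight_smul_right
  toLeft_balanced := W.toRight_balanced
  toRight_smul_left := W.toLeft_smul_left
  toRight_smul_right := W.toLeft_smul_right
  toRight_balanced := W.toLeft_balanced
  toLeft_smul := W.toRight_smul
  toRight_smul := W.toLeft_smul
  exists_sum_toLeft := W.exists_sum_toRight
  exists_sum_toRight := W.exists_sum_toLeft

section Unit

variable {R S P Q : Type*} [Ring R] [Ring S] [AddCommGroup P] [AddCommGroup Q]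
  [Module R P] [Module Sᵐᵒᵖ P] [Module S Q] [Module Rᵐᵒᵖ Q]
  [SMulCommClass Sᵐᵒᵖ R P] [SMulCommClass Rᵐᵒᵖ S Q] (W : StrictMoritaContext R S P Q)
  (X : Type*) [AddCommGroup X] [Module R X]

/-- The unit `x ↦ (q ↦ p ↦ ⟨p, q⟩ • x)` of the equivalence given by the functors `Hom_R(P, -)` and
`Hom_S(Q, -)`. -/
@[simps]
def unitLinearMap : X →ₗ[R] Q →ₗ[S] P →ₗ[R] X where
  toFun x :=
    { toFun := fun q ↦
        { toFun := fun p ↦ W.toLeft p q • x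
          map_add' := by simp [add_smul]
          map_smul' := by simp [W.toLeft_smul_left, mul_smul] }
      map_add' := fun q q' ↦ by ext; simp [add_smul]
      map_smul' := fun s q ↦ by ext p; simp [homModule_smul_apply, W.toLeft_balanced] }
  map_add' x y := by ext; simp
  map_smul' r x := by ext q p; simp [homModule_smul_apply, W.toLeft_smul_right, mul_smul]

theorem bijective_unitLinearMap : Function.Bijective (W.unitLinearMap X) := by
  obtain ⟨n, x, y, h⟩ := W.exists_sum_toLeft
  refine Function.bijective_iff_has_inverse.2
    ⟨fun φ ↦ ∑ t, φ (y t) (x t), fun v ↦ ?_, fun φ ↦ ?_⟩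
  · simp [← Finset.sum_smul, h]
  · ext q p
    have move (t) : W.toLeft p q • φ (y t) (x t) = φ (op (W.toLeft (x t) (y t)) • q) p := by
      rw [← map_smul, W.toLeft_smul, ← homModule_smul_apply, ← map_smul, W.toRight_smul]
    calc W.toLeft p q • ∑ t, φ (y t) (x t)
        = ∑ t, φ (op (W.toLeft (x t) (y t)) • q) p := by rw [Finset.smul_sum]; simp only [move]
      _ = φ (op (∑ t, W.toLeft (x t) (y t)) • q) p := by
          simp only [← LinearMap.sum_apply, ← map_sum, ← Finset.sum_smul, Finset.op_sum]
      _ = φ q p := by rw [h, op_one, one_smul]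

end Unit

section Equivalence

variable {R S : Type*} {P Q : Type v} [Ring R] [Ring S] [AddCommGroup P] [AddCommGroup Q]
  [Module R P] [Module Sᵐᵒᵖ P] [Module S Q] [Module Rᵐᵒᵖ Q]
  [SMulCommClass Sᵐᵒᵖ R P] [SMulCommClass Rᵐᵒᵖ S Q] (W : StrictMoritaContext R S P Q)

/-- The maps `unitLinearMap` as a natural isomorphism. -/
def unitIso : 𝟭 (ModuleCat.{v} R) ≅ homFunctor R S P ⋙ homFunctor S R Q :=
  NatIso.ofComponents
    (fun X ↦
      (LinearEquiv.ofBijective (W.unitLinearMap X) (W.bijective_unitLinearMap X)).toModuleIso)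
    fun u ↦ ModuleCat.hom_ext <| LinearMap.ext fun x ↦ LinearMap.ext fun q ↦ LinearMap.ext fun p ↦
      (map_smul u.hom (W.toLeft p q) x).symm

/-- The equivalence of module categories with functors `Hom_R(P, -)` and `Hom_S(Q, -)`. -/
def moduleCatEquiv : ModuleCat.{v} R ≌ ModuleCat.{v} S :=
  .mk (homFunctor R S P) (homFunctor S R Q) W.unitIso W.symm.unitIso.symm

end Equivalence

end StrictMoritaContext

theorem exists_sum_apply_smul_eq (R P : Type*) [Ring R] [AddCommGroup P] [Module R P]
    [Module.Finite R P] [Module.Projective R P] :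
    ∃ (n : ℕ) (q : Fin n → P →ₗ[R] R) (y : Fin n → P), ∀ x, ∑ t, q t x • y t = x := by
  obtain ⟨n, f, h, -, -, hfh⟩ := Module.Finite.exists_comp_eq_id_of_projective R P
  refine ⟨n, fun t ↦ LinearMap.proj t ∘ₗ h, fun t ↦ f (Pi.single t 1), fun x ↦ ?_⟩
  calc ∑ t, h x t • f (Pi.single t 1)
      = f (h x) := by simp only [← map_smul, ← map_sum, ← pi_eq_sum_univ']
    _ = x := LinearMap.congr_fun hfh x

theorem exists_sum_apply_eq_one {R P : Type*} [Ring R] [AddCommGroup P] [Module R P] {n : ℕ}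
    {f : (Fin n → P) →ₗ[R] R} (hf : Function.Surjective f) :
    ∃ (q : Fin n → P →ₗ[R] R) (y : Fin n → P), ∑ t, q t (y t) = 1 := by
  obtain ⟨y, hy⟩ := hf 1
  refine ⟨fun t ↦ f ∘ₗ LinearMap.single R (fun _ ↦ P) t, y, ?_⟩
  calc ∑ t, f (Pi.single t (y t))
      = f y := by rw [← map_sum, LinearMap.sum_single_apply]
    _ = 1 := hy

/-- The Morita context given by a progenerator `P` over `R` with `End_R(P) = Sᵐᵒᵖ`, with
`Q = Hom_R(P, R)`: the pairing into `R` is evaluation, and the pairing into `S` sends `(q, p)` to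
the element of `S` acting on `P` as `x ↦ q x • p`. -/
def StrictMoritaContext.ofProgenerator {R S P : Type*} [Ring R] [Ring S] [AddCommGroup P]
    [Module R P] [Module Sᵐᵒᵖ P] [SMulCommClass Sᵐᵒᵖ R P]
    [Module.Finite R P] [Module.Projective R P]
    (hgen : ∃ (n : ℕ) (f : (Fin n → P) →ₗ[R] R), Function.Surjective f)
    (hend : Function.Bijective (Module.toModuleEnd R P : Sᵐᵒᵖ →+* Module.End R P)) :
    StrictMoritaContext R S P (P →ₗ[R] R) :=
  let e := RingEquiv.ofBijective _ hend
  have e_symm_smul (u : Module.End R P) (p : P) : e.symm u • p = u p :=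
    LinearMap.congr_fun (e.apply_symm_apply u) p
  have op_ext {s t : S} (h : ∀ p : P, op s • p = op t • p) : s = t :=
    op_injective (hend.1 (LinearMap.ext h))
  { toLeft := AddMonoidHom.flip LinearMap.toAddMonoidHom'
    toRight := .mk' (fun q ↦ .mk' (fun p ↦ (e.symm (q.smulRight p)).unop) fun p p' ↦
          op_ext fun x ↦ by simp [e_symm_smul, add_smul])
        fun q q' ↦ AddMonoidHom.ext fun p ↦ op_ext fun x ↦ by simp [e_symm_smul, add_smul]
    toLeft_smul_left := by simp
    toLeft_smul_right := by simp
    toLeft_balanced := fun _ _ _ ↦ rfl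
    toRight_smul_left := fun s q p ↦ op_ext fun x ↦ by
      simp [e_symm_smul, mul_smul, homModule_smul_apply]
    toRight_smul_right := fun s q p ↦ op_ext fun x ↦ by simp [e_symm_smul, mul_smul, smul_comm]
    toRight_balanced := fun r q p ↦ op_ext fun x ↦ by simp [e_symm_smul, mul_smul]
    toLeft_smul := by simp [e_symm_smul]
    toRight_smul := fun q p q' ↦ by ext; simp [e_symm_smul, homModule_smul_apply]
    exists_sum_toLeft := by
      obtain ⟨n, f, hf⟩ := hgen
      obtain ⟨q, y, h⟩ := exists_sum_apply_eq_one hf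
      exact ⟨n, y, q, h⟩
    exists_sum_toRight := by
      obtain ⟨n, q, y, h⟩ := exists_sum_apply_smul_eq R P
      exact ⟨n, q, y, op_ext fun x ↦ by simp [e_symm_smul, Finset.sum_smul, h]⟩ }

end HomModule

section Amalgam

variable {Z Γ R A : Type*} [Ring R] [Group Γ] [Ring A]

/-- The ring `A` is generated by commuting images of the ring `R` and the group `Γ`, subject only to
the identification of `zR z` with `zΓ z` for all `z : Z`. Uniqueness of lifts is encoded as
generation, and existence refers to rings `T` in a fixed universe. -/
structure IsCommutingAmalgam (zR : Z → R) (zΓ : Z → Γ) (i : R →+* A) (j : Γ →* A) : Prop where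
  commute : ∀ r c, Commute (i r) (j c)
  map_eq_map : ∀ z, i (zR z) = j (zΓ z)
  closure_eq_top : Subring.closure (Set.range i ∪ Set.range j) = ⊤
  exists_lift : ∀ (T : Type v) [Ring T] (f : R →+* T) (ρ : Γ →* T),
    (∀ r c, Commute (f r) (ρ c)) → (∀ z, f (zR z) = ρ (zΓ z)) →
      ∃ g : A →+* T, (∀ r, g (i r) = f r) ∧ ∀ c, g (j c) = ρ c

/-- The property of an `R`-module with a `Γ`-action that each `zΓ z` acts as the scalar `zR z`. -/
def ActsThrough (zR : Z → R) (zΓ : Z → Γ) : ObjectProperty (Action (ModuleCat.{v} R) Γ) :=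
  fun V ↦ ∀ z (x : V.V), (V.ρ (zΓ z)).hom x = zR z • x

variable {zR : Z → R} {zΓ : Z → Γ} {i : R →+* A} {j : Γ →* A}

instance : (ActsThrough.{v} zR zΓ).IsClosedUnderIsomorphisms where
  of_iso {V W} e hV z x := by
    have comm : (W.ρ (zΓ z)).hom (e.hom.hom.hom (e.inv.hom.hom x)) =
        e.hom.hom.hom ((V.ρ (zΓ z)).hom (e.inv.hom.hom x)) :=
      congr($(e.hom.comm (zΓ z)).hom (e.inv.hom.hom x)).symm
    have cancel : e.hom.hom.hom (e.inv.hom.hom x) = x := congr($(e.inv_hom_id).hom.hom x)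
    rw [hV, map_smul, cancel] at comm
    exact comm

/-- Restriction of an `A`-module to an `R`-module with an action of `Γ`, along commuting maps
`i : R →+* A` and `j : Γ →* A`. -/
def restrictToAction (h : ∀ r c, Commute (i r) (j c)) :
    ModuleCat.{v} A ⥤ Action (ModuleCat.{v} R) Γ where
  obj X :=
    { V := (ModuleCat.restrictScalars i).obj X
      ρ :=
        { toFun c := ModuleCat.ofHom (X := (ModuleCat.restrictScalars i).obj X)
            (Y := (ModuleCat.restrictScalars i).obj X)
            { toFun := fun x : X ↦ j c • x
              map_add' := fun x y : X ↦ smul_add (j c) x y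
              map_smul' := fun r (x : X) ↦ by
                change j c • i r • x = i r • j c • x
                rw [← mul_smul, ← mul_smul, h] }
          map_one' := ModuleCat.hom_ext <| LinearMap.ext fun x : X ↦
            congr($(map_one j) • x).trans (one_smul A x)
          map_mul' c d := ModuleCat.hom_ext <| LinearMap.ext fun x : X ↦
            congr($(map_mul j c d) • x).trans (mul_smul (j c) (j d) x) } }
  map u :=
    { hom := (ModuleCat.restrictScalars i).map u
      comm c := ModuleCat.hom_ext <| LinearMap.ext fun x ↦ map_smul u.hom (j c) x }

namespace IsCommutingAmalgam

theorem map_smul_of_map_smul (h : IsCommutingAmalgam.{v} zR zΓ i j) {X Y : Type*}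
    [AddCommGroup X] [AddCommGroup Y] [Module A X] [Module A Y]
    (u : X →+ Y) (hi : ∀ r x, u (i r • x) = i r • u x)
    (hj : ∀ c x, u (j c • x) = j c • u x) (a : A) (x : X) : u (a • x) = a • u x := by
  have ha : a ∈ Subring.closure (Set.range i ∪ Set.range j) := h.closure_eq_top ▸ Subring.mem_top a
  induction ha using Subring.closure_induction generalizing x with
  | mem a ha => obtain ⟨r, rfl⟩ | ⟨c, rfl⟩ := ha <;> simp only [hi, hj]
  | zero => simp only [zero_smul, map_zero]
  | one => simp only [one_smul]
  | add a b _ _ ha hb => simp only [add_smul, map_add, ha, hb]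
  | neg a _ ha => simp only [neg_smul, map_neg, ha]
  | mul a b _ _ ha hb => simp only [mul_smul, ha, hb]

variable (h : IsCommutingAmalgam.{v} zR zΓ i j)

/-- The functor identifying `A`-modules with the `R`-modules with `Γ`-action in which each `zΓ z`
acts as `zR z`. -/
def toActsThrough : ModuleCat.{v} A ⥤ (ActsThrough.{v} zR zΓ).FullSubcategory :=
  (ActsThrough zR zΓ).lift (restrictToAction h.commute) fun X z (x : X) ↦
    congr($(h.map_eq_map z) • x).symm

instance : h.toActsThrough.Faithful where
  map_injective huv := ModuleCat.hom_ext <| LinearMap.ext fun x ↦ congr($(huv).hom.hom.hom x)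

instance : h.toActsThrough.Full where
  map_surjective {X Y} u :=
    let φ := u.hom.hom.hom
    ⟨ModuleCat.ofHom
      { toFun := φ
        map_add' := map_add φ
        map_smul' := h.map_smul_of_map_smul (X := X) (Y := Y) φ.toAddMonoidHom (map_smul φ)
          fun c x ↦ congr($(u.hom.comm c).hom x) }, rfl⟩

instance : h.toActsThrough.EssSurj where
  mem_essImage V := by
    let ρ : Γ →* AddMonoid.End V.obj.V :=
      (Module.toAddMonoidEnd (Module.End R V.obj.V) V.obj.V).toMonoidHom.comp
        ((ModuleCat.endRingEquiv V.obj.V).toMonoidHom.comp V.obj.ρ)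
    obtain ⟨g, hgi, hgj⟩ := h.exists_lift _ (Module.toAddMonoidEnd R V.obj.V) ρ
      (fun r c ↦ AddMonoidHom.ext fun x ↦ (map_smul (V.obj.ρ c).hom r x).symm)
      fun z ↦ AddMonoidHom.ext fun x ↦ (V.property z x).symm
    let : Module A V.obj.V := Module.compHom V.obj.V g
    let e : (ModuleCat.restrictScalars i).obj (ModuleCat.of A V.obj.V) ≃ₗ[R] V.obj.V :=
      { toFun := fun x ↦ x
        invFun := fun x ↦ x
        map_add' := fun _ _ ↦ rfl
        map_smul' := fun r x ↦ congr($(hgi r) x) }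
    exact ⟨.of A V.obj.V, ⟨ObjectProperty.isoMk _ <| Action.mkIso e.toModuleIso fun c ↦
      ModuleCat.hom_ext <| LinearMap.ext fun x ↦ congr($(hgj c) x)⟩⟩

instance : h.toActsThrough.IsEquivalence where

end IsCommutingAmalgam

end Amalgam

namespace StrictMoritaContext

attribute [local instance] homModule

variable {R S : Type*} {P Q : Type v} [Ring R] [Ring S] [AddCommGroup P] [AddCommGroup Q]
  [Module R P] [Module Sᵐᵒᵖ P] [Module S Q] [Module Rᵐᵒᵖ Q]
  [SMulCommClass Sᵐᵒᵖ R P] [SMulCommClass Rᵐᵒᵖ S Q]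
  {Z Γ : Type*} [Group Γ] {zR : Z → R} {zS : Z → S} {zΓ : Z → Γ}

theorem actsThrough_mapAction_homFunctor_iff (W : StrictMoritaContext R S P Q)
    (hz : ∀ z (p : P), zR z • p = op (zS z) • p) (V : Action (ModuleCat.{v} R) Γ) :
    ActsThrough zS zΓ (((homFunctor R S P).mapAction Γ).obj V) ↔ ActsThrough zR zΓ V := by
  have hom_smul (z) (f : P →ₗ[R] V.V) (p : P) : (zS z • f) p = zR z • f p := by
    rw [homModule_smul_apply, ← hz, map_smul]
  refine ⟨fun hV z v ↦ ?_, fun hV z (f : P →ₗ[R] V.V) ↦ LinearMap.ext fun p ↦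
    (hV z (f p)).trans (hom_smul z f p).symm⟩
  obtain ⟨n, x, y, h⟩ := W.exists_sum_toLeft
  have hv : v = ∑ t, W.unitLinearMap V.V v (y t) (x t) := by simp [← Finset.sum_smul, h]
  rw [hv, map_sum, Finset.smul_sum]
  exact Finset.sum_congr rfl fun t _ ↦
    (LinearMap.congr_fun (hV z (W.unitLinearMap V.V v (y t))) (x t)).trans (hom_smul z _ _)

/-- The equivalence `moduleCatEquiv` on modules with a `Γ`-action in which `Z` acts by scalars that
act on `P` in the same way from both sides. -/
def actsThroughEquiv (W : StrictMoritaContext R S P Q)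
    (hz : ∀ z (p : P), zR z • p = op (zS z) • p) :
    (ActsThrough.{v} zR zΓ).FullSubcategory ≌ (ActsThrough.{v} zS zΓ).FullSubcategory :=
  (W.moduleCatEquiv.mapAction Γ).congrFullSubcategory
    (funext fun V ↦ propext (W.actsThrough_mapAction_homFunctor_iff hz V))

/-- A Morita context between `R` and `S` yields an equivalence between the module categories of the
extensions `A` and `A'` of `R` and `S` by the same commuting group `Γ`. -/
def amalgamEquiv (W : StrictMoritaContext R S P Q) {A A' : Type*} [Ring A] [Ring A']
    {i : R →+* A} {j : Γ →* A} {i' : S →+* A'} {j' : Γ →* A'}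
    (hz : ∀ z (p : P), zR z • p = op (zS z) • p)
    (h : IsCommutingAmalgam.{v} zR zΓ i j) (h' : IsCommutingAmalgam.{v} zS zΓ i' j') :
    ModuleCat.{v} A ≌ ModuleCat.{v} A' :=
  h.toActsThrough.asEquivalence.trans
    ((W.actsThroughEquiv hz).trans h'.toActsThrough.asEquivalence.symm)

end StrictMoritaContext

section GroupAlgebra

variable {N Γ H : Type*} [Group N] [Group Γ] [Group H] {α : N →* H} {β : Γ →* H}

theorem surjective_noncommCoprod (hαβ : ∀ n c, Commute (α n) (β c))
    (hsup : α.range ⊔ β.range = ⊤) : Function.Surjective (α.noncommCoprod β hαβ) :=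
  MonoidHom.range_eq_top.1 ((α.noncommCoprod_range β hαβ).trans hsup)

theorem exists_monoidHom_of_range_sup_range_eq_top {T : Type*} [Monoid T]
    (hαβ : ∀ n c, Commute (α n) (β c)) (hsup : α.range ⊔ β.range = ⊤) (f : N →* T) (ρ : Γ →* T)
    (hfρ : ∀ n c, Commute (f n) (ρ c)) (h : ∀ n c, α n = β c → f n = ρ c) :
    ∃ g : H →* T, (∀ n, g (α n) = f n) ∧ ∀ c, g (β c) = ρ c := by
  let π := α.noncommCoprod β hαβ
  let u : N × Γ →* Tˣ := (f.noncommCoprod ρ hfρ).toHomUnits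
  have hker : π.ker ≤ u.ker := fun ⟨n, c⟩ hnc ↦ by
    have hn : α n = β c⁻¹ := by
      rw [map_inv]
      exact eq_inv_of_mul_eq_one_left hnc
    refine Units.ext ?_
    simp [u, h n _ hn, ← map_mul]
  let g := π.liftOfSurjective (surjective_noncommCoprod hαβ hsup) ⟨u, hker⟩
  have hg (n c) : (g (α n * β c) : T) = f n * ρ c :=
    congr($(π.liftOfRightInverse_comp_apply _ _ ⟨u, hker⟩ (n, c)))
  refine ⟨(Units.coeHom T).comp g, fun n ↦ ?_, fun c ↦ ?_⟩
  · simpa using hg n 1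
  · simpa using hg 1 c

variable {k : Type*} [Ring k]

theorem exists_ringHom_of_range_sup_range_eq_top {T : Type*} [Ring T]
    (hαβ : ∀ n c, Commute (α n) (β c)) (hsup : α.range ⊔ β.range = ⊤)
    (f : MonoidAlgebra k N →+* T) (ρ : Γ →* T) (hfρ : ∀ x c, Commute (f x) (ρ c))
    (h : ∀ n c, α n = β c → f (single n 1) = ρ c) :
    ∃ g : MonoidAlgebra k H →+* T,
      (∀ x, g (mapDomainRingHom k α x) = f x) ∧ ∀ c, g (single (β c) 1) = ρ c := by
  obtain ⟨g, hgα, hgβ⟩ := exists_monoidHom_of_range_sup_range_eq_top hαβ hsup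
    ((f : MonoidAlgebra k N →* T).comp (of k N)) ρ (fun n c ↦ hfρ _ c) h
  have hcomm (a : k) (x : H) : Commute (f.comp singleOneRingHom a) (g x) := by
    obtain ⟨⟨n, c⟩, rfl⟩ := surjective_noncommCoprod hαβ hsup x
    rw [MonoidHom.noncommCoprod_apply, map_mul, hgα, hgβ]
    refine Commute.mul_right (Commute.map ?_ f) (hfρ _ c)
    simp [Commute, SemiconjBy, single_mul_single]
  refine ⟨liftNCRingHom _ g hcomm, fun x ↦ ?_, fun c ↦ by simp [hgβ, ← one_def]⟩
  induction x using MonoidAlgebra.induction_linear with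
  | zero => simp
  | add x y hx hy => simp only [map_add, hx, hy]
  | single n a => simp [hgα, ← map_mul, single_mul_single]

theorem isCommutingAmalgam_monoidAlgebra {Z : Type*} {zN : Z → N} {zΓ : Z → Γ}
    (hαβ : ∀ n c, Commute (α n) (β c)) (hsup : α.range ⊔ β.range = ⊤)
    (hz : ∀ z, α (zN z) = β (zΓ z)) (hZ : ∀ n c, α n = β c → ∃ z, zN z = n ∧ zΓ z = c) :
    IsCommutingAmalgam.{v} (fun z ↦ single (zN z) (1 : k)) zΓ (mapDomainRingHom k α)
      ((of k H).comp β) where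
  commute x c := by
    induction x using MonoidAlgebra.induction_linear with
    | zero => simp
    | add x y hx hy => exact map_add (mapDomainRingHom k α) x y ▸ hx.add_left hy
    | single n a => simp [Commute, SemiconjBy, single_mul_single, (hαβ n c).eq]
  map_eq_map z := by simp [hz]
  closure_eq_top := by
    refine top_le_iff.1 fun x _ ↦ ?_
    induction x using MonoidAlgebra.induction_linear with
    | zero => exact zero_mem _
    | add x y hx hy => exact add_mem (hx trivial) (hy trivial)
    | single h a =>
      obtain ⟨⟨n, c⟩, rfl⟩ := surjective_noncommCoprod hαβ hsup h
      have hnc : single (α n * β c) a = mapDomainRingHom k α (single n a) * (of k H).comp β c := by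
        simp [single_mul_single]
      exact hnc ▸ mul_mem (Subring.subset_closure (.inl ⟨_, rfl⟩))
        (Subring.subset_closure (.inr ⟨c, rfl⟩))
  exists_lift T _ f ρ hfρ h :=
    exists_ringHom_of_range_sup_range_eq_top hαβ hsup f ρ hfρ fun n c hnc ↦ by
      obtain ⟨z, rfl, rfl⟩ := hZ n c hnc
      exact h z

end GroupAlgebra

section BlockQuot

variable {R A : Type} [Ring R] [Ring A]

theorem blockPi_surjective (e : R) : Function.Surjective (blockPi e) :=
  RingCon.mk'_surjective _

theorem blockPi_self (e : R) : blockPi e e = 1 := by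
  refine ((RingCon.eq _).2 ?_).symm
  rw [TwoSidedIdeal.rel_iff]
  exact TwoSidedIdeal.subset_span rfl

/-- The universal property of the block algebra: a ring homomorphism sending `e` to `1` factors
through `blockPi e`. -/
def blockLift {T : Type*} [Ring T] (e : R) (f : R →+* T) (h : f e = 1) : BlockQuot e →+* T :=
  RingCon.lift _ f fun x y hxy ↦ by
    have hle : TwoSidedIdeal.span {1 - e} ≤ TwoSidedIdeal.ker f := by
      simp [TwoSidedIdeal.span_le, TwoSidedIdeal.mem_ker, h]
    simpa [TwoSidedIdeal.mem_ker, sub_eq_zero] using hle ((TwoSidedIdeal.rel_iff _ _ _).1 hxy)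

/-- The map of block algebras induced by a ring homomorphism. -/
def blockMap (i : R →+* A) (e : R) : BlockQuot e →+* BlockQuot (i e) :=
  blockLift e ((blockPi (i e)).comp i) (blockPi_self (i e))

theorem IsCommutingAmalgam.blockQuot {Z Γ : Type*} [Group Γ] {zR : Z → R} {zΓ : Z → Γ}
    {i : R →+* A} {j : Γ →* A} (h : IsCommutingAmalgam.{v} zR zΓ i j) (e : R) :
    IsCommutingAmalgam.{v} (fun z ↦ blockPi e (zR z)) zΓ (blockMap i e)
      ((blockPi (i e) : A →* BlockQuot (i e)).comp j) where
  commute r c := by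
    obtain ⟨r, rfl⟩ := blockPi_surjective e r
    exact (h.commute r c).map (blockPi (i e))
  map_eq_map z := congrArg (blockPi (i e)) (h.map_eq_map z)
  closure_eq_top := by
    rw [← top_le_iff, ← RingHom.range_eq_top.2 (blockPi_surjective (i e)), RingHom.range_eq_map,
      ← h.closure_eq_top, RingHom.map_closure]
    refine Subring.closure_mono ?_
    rintro _ ⟨_, ⟨r, rfl⟩ | ⟨c, rfl⟩, rfl⟩
    exacts [.inl ⟨blockPi e r, rfl⟩, .inr ⟨c, rfl⟩]
  exists_lift T _ f ρ hfρ hz := by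
    obtain ⟨g, hgi, hgj⟩ := h.exists_lift T (f.comp (blockPi e)) ρ (fun r c ↦ hfρ _ c) hz
    refine ⟨blockLift (i e) g ?_, fun r ↦ ?_, hgj⟩
    · rw [hgi, RingHom.comp_apply, blockPi_self, map_one]
    · obtain ⟨r, rfl⟩ := blockPi_surjective e r
      exact hgi r

end BlockQuot

theorem InducesMorita.isMoritaEquivalentRing_of_isCommutingAmalgam {k B B' A A' M : Type}
    {Z Γ : Type*} [CommRing k] [Ring B] [Ring B'] [Ring A] [Ring A'] [Algebra k B] [Algebra k B']
    [AddCommGroup M] [Module (B ⊗[k] B'ᵐᵒᵖ) M] [Group Γ] {zB : Z → B} {zB' : Z → B'} {zΓ : Z → Γ}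
    {i : B →+* A} {j : Γ →* A} {i' : B' →+* A'} {j' : Γ →* A'} (hM : InducesMorita k B B' M)
    (h : IsCommutingAmalgam.{0} zB zΓ i j) (h' : IsCommutingAmalgam.{0} zB' zΓ i' j')
    (hz : ∀ z (m : M), (zB z ⊗ₜ[k] (1 : B'ᵐᵒᵖ)) • m = ((1 : B) ⊗ₜ[k] op (zB' z)) • m) :
    IsMoritaEquivalentRing A A' := by
  let _ : Module B M :=
    .compHom M (Algebra.TensorProduct.includeLeftRingHom : B →+* B ⊗[k] B'ᵐᵒᵖ)
  let _ : Module B'ᵐᵒᵖ M :=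
    .compHom M (Algebra.TensorProduct.includeRight : B'ᵐᵒᵖ →ₐ[k] B ⊗[k] B'ᵐᵒᵖ).toRingHom
  have : SMulCommClass B'ᵐᵒᵖ B M := ⟨fun s r m ↦ by
    change ((1 : B) ⊗ₜ[k] s) • (r ⊗ₜ[k] (1 : B'ᵐᵒᵖ)) • m =
      (r ⊗ₜ[k] (1 : B'ᵐᵒᵖ)) • ((1 : B) ⊗ₜ[k] s) • m
    simp [← mul_smul]⟩
  obtain ⟨_, _, hgen, φ, hφ, hφM⟩ := hM
  have hφ_eq : φ = Module.toModuleEnd B M := RingHom.ext fun s ↦ LinearMap.ext (hφM s)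
  let _ : Module B' (M →ₗ[B] B) := homModule
  have : SMulCommClass Bᵐᵒᵖ B' (M →ₗ[B] B) := smulCommClass_homModule
  exact ⟨(StrictMoritaContext.ofProgenerator hgen (hφ_eq ▸ hφ)).amalgamEquiv hz h h'⟩

section Subgroups

variable {k G : Type} [CommRing k] [Group G] {N N' C : Subgroup G}

theorem isCommutingAmalgam_blockQuot_sup {Z : Type*} (hNC : C ≤ Subgroup.centralizer N)
    {zN : Z → N} {zC : Z → C} (hz : ∀ z, (zN z : G) = zC z)
    (hZ : ∀ (n : N) (c : C), (n : G) = c → ∃ z, zN z = n ∧ zC z = c) (b : MonoidAlgebra k N) :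
    IsCommutingAmalgam.{v} (fun z ↦ blockPi b (single (zN z) (1 : k))) zC
      (blockMap (mapDomainRingHom k (Subgroup.inclusion (le_sup_left : N ≤ N ⊔ C))) b)
      ((blockPi (mapDomainRingHom k (Subgroup.inclusion (le_sup_left : N ≤ N ⊔ C)) b) :
        MonoidAlgebra k ↥(N ⊔ C) →* _).comp
          ((of k _).comp (Subgroup.inclusion (le_sup_right : C ≤ N ⊔ C)))) := by
  refine (isCommutingAmalgam_monoidAlgebra (fun n c ↦ ?_) ?_ (fun z ↦ Subtype.ext (hz z))
    fun n c hnc ↦ hZ n c (congrArg Subtype.val hnc)).blockQuot b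
  · exact Subtype.ext (hNC c.2 n n.2)
  · rw [Subgroup.inclusion_range, Subgroup.inclusion_range,
      ← Subgroup.subgroupOf_sup le_sup_left le_sup_right, Subgroup.subgroupOf_self]

theorem centralizers_morita_general (hC : C ≤ Subgroup.centralizer N)
    (hC' : C ≤ Subgroup.centralizer N') (hNN' : N ⊓ C = N' ⊓ C)
    (b : MonoidAlgebra k N) (b' : MonoidAlgebra k N') {M : Type} [AddCommGroup M]
    [Module (BlockQuot b ⊗[k] (BlockQuot b')ᵐᵒᵖ) M]
    (hM : InducesMorita k (BlockQuot b) (BlockQuot b') M)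
    (hZ : ∀ z (hz : z ∈ N) (hz' : z ∈ N'), z ∈ C → ∀ m : M,
      (blockPi b (single ⟨z, hz⟩ (1 : k)) ⊗ₜ[k] (1 : (BlockQuot b')ᵐᵒᵖ)) • m =
        ((1 : BlockQuot b) ⊗ₜ[k] op (blockPi b' (single ⟨z, hz'⟩ (1 : k)))) • m) :
    IsMoritaEquivalentRing
      (BlockQuot (mapDomainRingHom k (Subgroup.inclusion (le_sup_left : N ≤ N ⊔ C)) b))
      (BlockQuot (mapDomainRingHom k (Subgroup.inclusion (le_sup_left : N' ≤ N' ⊔ C)) b')) := by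
  have mem' (z : ↥(N ⊓ C)) : (z : G) ∈ N' ⊓ C := hNN' ▸ z.2
  let zN (z : ↥(N ⊓ C)) : N := ⟨z, z.2.1⟩
  let zN' (z : ↥(N ⊓ C)) : N' := ⟨z, (mem' z).1⟩
  let zC (z : ↥(N ⊓ C)) : C := ⟨z, z.2.2⟩
  have h := isCommutingAmalgam_blockQuot_sup.{0} hC (zN := zN) (zC := zC) (fun _ ↦ rfl)
    (fun n c hnc ↦ ⟨⟨n, n.2, hnc ▸ c.2⟩, rfl, Subtype.ext hnc⟩) b
  have h' := isCommutingAmalgam_blockQuot_sup.{0} hC' (zN := zN') (zC := zC) (fun _ ↦ rfl)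
    (fun n c hnc ↦ ⟨⟨n, hNN' ▸ ⟨n.2, hnc ▸ c.2⟩⟩, rfl, Subtype.ext hnc⟩) b'
  exact hM.isMoritaEquivalentRing_of_isCommutingAmalgam h h' fun z ↦ hZ z _ _ z.2.2

end Subgroups

/-- **Extension to centralizer subalgebras** (Marcus-Minuta, Proposition 4.2,
Morita-equivalence form). If `M` is a `(B, B')`-bimodule inducing a Morita equivalence
between the blocks `B = b.kN` and `B' = b'.kN'` on which `Z(N)` acts identically on both
sides, then the block algebras `C = b.k[N.C_G(N)]` and `C' = b'.k[N'.C_G(N)]` are Morita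
equivalent. -/
theorem centralizers_morita (k : Type) [CommRing k] (G : Type) [Group G]
    (N : Subgroup G) [hN : N.Normal] (G' : Subgroup G)
    (hC : Subgroup.centralizer (N : Set G) ≤ G')
    (hGG' : N ⊔ G' = ⊤)
    (b : MonoidAlgebra k ↥N)
    (hbc : b ∈ Subring.center (MonoidAlgebra k ↥N)) (hbi : IsIdempotentElem b)
    (hbinv : ∀ g : G,
      single g (1 : k) * mapDomainRingHom k N.subtype b * single g⁻¹ (1 : k) =
        mapDomainRingHom k N.subtype b)
    (b' : MonoidAlgebra k ↥(G' ⊓ N))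
    (hb'c : b' ∈ Subring.center (MonoidAlgebra k ↥(G' ⊓ N))) (hb'i : IsIdempotentElem b')
    (hb'inv : ∀ g' : ↥G',
      single g' (1 : k) *
          mapDomainRingHom k (Subgroup.inclusion (inf_le_left : G' ⊓ N ≤ G')) b' *
          single g'⁻¹ (1 : k) =
        mapDomainRingHom k (Subgroup.inclusion (inf_le_left : G' ⊓ N ≤ G')) b')
    (M : Type) [AddCommGroup M] [Module k M]
    [Module (BlockQuot b ⊗[k] (BlockQuot b')ᵐᵒᵖ) M]
    [IsScalarTower k (BlockQuot b ⊗[k] (BlockQuot b')ᵐᵒᵖ) M]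
    (hM : InducesMorita k (BlockQuot b) (BlockQuot b') M)
    (hZ : ∀ z : ↥N, z ∈ Subgroup.center ↥N → ∀ hz' : (z : G) ∈ G' ⊓ N, ∀ m : M,
      (blockPi b (single z (1 : k)) ⊗ₜ[k] (1 : (BlockQuot b')ᵐᵒᵖ)) • m =
        ((1 : BlockQuot b) ⊗ₜ[k]
          MulOpposite.op (blockPi b' (single (⟨(z : G), hz'⟩ : ↥(G' ⊓ N)) (1 : k)))) • m) :
    IsMoritaEquivalentRing
      (BlockQuot (mapDomainRingHom k
        (Subgroup.inclusion (le_sup_left : N ≤ N ⊔ Subgroup.centralizer (N : Set G))) b))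
      (BlockQuot (mapDomainRingHom k
        (Subgroup.inclusion
          (le_sup_left : G' ⊓ N ≤ (G' ⊓ N) ⊔ Subgroup.centralizer (N : Set G))) b')) := by
  refine centralizers_morita_general le_rfl (Subgroup.centralizer_le inf_le_right) ?_ b b' hM
    fun z hz hz' hzC ↦ hZ ⟨z, hz⟩ ?_ hz'
  · exact le_antisymm (le_inf (le_inf (inf_le_right.trans hC) inf_le_left) inf_le_right)
      (inf_le_inf_right _ inf_le_right)
  · exact Subgroup.mem_center_iff.2 fun n ↦ Subtype.ext (hzC n n.2)
end
end

section
/- Then: (a) C_Ĝ(j(N)) ≤ Ĝ'; (b) Ĝ = j(N)·Ĝ' (the join of j(N) and Ĝ' is all of Ĝ); (c) j⁻¹(Ĝ') = i⁻¹(G') as subgroups of N (i.e., 'N ∩ Ĝ' equals N' = N ∩ G''). -/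
/-!
Subgroups are carried from `G` to `Ĝ` through their images in `MulAut N`. In either group `N` acts
by its inner automorphisms and the kernel of the action is the centralizer of `N`. Hence
`N G' = G` becomes `ε(G) = Inn(N) ε(G')`, which pulls back to `N Ĝ' = Ĝ`, while `C_G(N) ≤ G'` makes
`G'` the full preimage of `ε(G')`, so that `N ∩ G'` and `N ∩ Ĝ'` are both the preimage of `ε(G')`
under `N → Inn(N)`.
-/

theorem sup_comap_eq_top_of_range_le {H A : Type*} [Group H] [Group A] {f : H →* A}
    {K : Subgroup H} {L : Subgroup A} [(K.map f).Normal] (hf : f.range ≤ K.map f ⊔ L) :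
    K ⊔ L.comap f = ⊤ := by
  refine eq_top_iff.mpr fun x _ => ?_
  obtain ⟨_, ⟨k, hk, rfl⟩, l, hl, hkl⟩ := Subgroup.mem_sup_of_normal_left.mp (hf ⟨x, rfl⟩)
  have hx : k⁻¹ * x ∈ L.comap f := by
    rwa [Subgroup.mem_comap, map_mul, map_inv, ← hkl, inv_mul_cancel_left]
  simpa only [mul_inv_cancel_left] using Subgroup.mul_mem_sup hk hx

instance normal_range_conj (N : Type*) [Group N] : (MulAut.conj : N →* MulAut N).range.Normal where
  conj_mem := by
    rintro _ ⟨n, rfl⟩ φ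
    exact ⟨φ n, by ext; simp⟩

/-- `ε : G →* MulAut N` is the conjugation action of `G` on `N`, where `N` is regarded as a
subgroup of `G` through `i`. Injectivity of `i` is not part of the definition; without it, this
condition need not determine `ε`. -/
def IsConjHom {N G : Type*} [Group N] [Group G] (i : N →* G) (ε : G →* MulAut N) : Prop :=
  ∀ (g : G) (n : N), i (ε g n) = g * i n * g⁻¹

namespace IsConjHom

variable {N G : Type*} [Group N] [Group G] {i : N →* G} {ε : G →* MulAut N}

theorem comp_eq_conj (hε : IsConjHom i ε) (hi : Function.Injective i) :
    ε.comp i = MulAut.conj := by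
  ext n m
  apply hi
  simp only [MonoidHom.comp_apply, hε (i n) m, MulAut.conj_apply, map_mul, map_inv]

theorem map_range_eq_range_conj (hε : IsConjHom i ε) (hi : Function.Injective i) :
    i.range.map ε = MulAut.conj.range := by
  rw [MonoidHom.map_range, hε.comp_eq_conj hi]

theorem ker_eq_centralizer (hε : IsConjHom i ε) (hi : Function.Injective i) :
    ε.ker = Subgroup.centralizer (i.range : Set G) := by
  ext g
  have fixes_iff_commutes (n : N) : ε g n = n ↔ i n * g = g * i n := by
    rw [← hi.eq_iff, hε, mul_inv_eq_iff_eq_mul, eq_comm]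
  simp [MonoidHom.mem_ker, MulEquiv.ext_iff, Subgroup.mem_centralizer_iff, fixes_iff_commutes]

theorem centralizer_le_comap (hε : IsConjHom i ε) (hi : Function.Injective i)
    (L : Subgroup (MulAut N)) : Subgroup.centralizer (i.range : Set G) ≤ L.comap ε :=
  hε.ker_eq_centralizer hi ▸ Subgroup.ker_le_comap ε L

theorem range_sup_comap_eq_top (hε : IsConjHom i ε) (hi : Function.Injective i)
    {L : Subgroup (MulAut N)} (hL : ε.range ≤ MulAut.conj.range ⊔ L) :
    i.range ⊔ L.comap ε = ⊤ := by
  rw [← hε.map_range_eq_range_conj hi] at hL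
  have : (i.range.map ε).Normal := hε.map_range_eq_range_conj hi ▸ normal_range_conj N
  exact sup_comap_eq_top_of_range_le hL

theorem range_eq_range_conj_sup_map (hε : IsConjHom i ε) (hi : Function.Injective i)
    {K : Subgroup G} (hK : i.range ⊔ K = ⊤) : ε.range = MulAut.conj.range ⊔ K.map ε := by
  rw [MonoidHom.range_eq_map, ← hK, Subgroup.map_sup, hε.map_range_eq_range_conj hi]

theorem comap_comap_eq_comap_conj (hε : IsConjHom i ε) (hi : Function.Injective i)
    (L : Subgroup (MulAut N)) : (L.comap ε).comap i = L.comap MulAut.conj := by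
  rw [Subgroup.comap_comap, hε.comp_eq_conj hi]

theorem comap_map_eq_self (hε : IsConjHom i ε) (hi : Function.Injective i) {K : Subgroup G}
    (hK : Subgroup.centralizer (i.range : Set G) ≤ K) : (K.map ε).comap ε = K :=
  Subgroup.comap_map_eq_self (hε.ker_eq_centralizer hi ▸ hK)

end IsConjHom

theorem butterfly_subgroup_properties_general {N G Ghat : Type*} [Group N] [Group G] [Group Ghat]
    {i : N →* G} {j : N →* Ghat} (hi : Function.Injective i) (hj : Function.Injective j)
    {ε : G →* MulAut N} (hε : IsConjHom i ε) {εhat : Ghat →* MulAut N} (hεhat : IsConjHom j εhat)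
    {G' : Subgroup G} (hCG' : Subgroup.centralizer (i.range : Set G) ≤ G')
    (hGG' : i.range ⊔ G' = ⊤) (hrange : εhat.range ≤ ε.range) :
    Subgroup.centralizer (j.range : Set Ghat) ≤ (G'.map ε).comap εhat ∧
    j.range ⊔ (G'.map ε).comap εhat = ⊤ ∧
    ((G'.map ε).comap εhat).comap j = G'.comap i := by
  refine ⟨hεhat.centralizer_le_comap hj _, ?_, ?_⟩
  · exact hεhat.range_sup_comap_eq_top hj
      (hrange.trans_eq (hε.range_eq_range_conj_sup_map hi hGG'))
  · rw [hεhat.comap_comap_eq_comap_conj hj, ← hε.comap_comap_eq_comap_conj hi,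
      hε.comap_map_eq_self hi hCG']

/-- Properties of `Ĝ' := ε̂⁻¹(ε(G'))` from the proof of the butterfly theorem:
`C_Ĝ(j(N)) ≤ Ĝ'`, `Ĝ = j(N)·Ĝ'` and `N ∩ Ĝ' = N ∩ G' (= N')`. -/
theorem butterfly_subgroup_properties (N G Ghat : Type) [Group N] [Group G] [Group Ghat]
    (i : N →* G) (j : N →* Ghat)
    (hi : Function.Injective i) (hj : Function.Injective j)
    (hNi : i.range.Normal) (hNj : j.range.Normal)
    (ε : G →* MulAut N) (hε : ∀ (g : G) (n : N), i (ε g n) = g * i n * g⁻¹)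
    (εhat : Ghat →* MulAut N)
    (hεhat : ∀ (x : Ghat) (n : N), j (εhat x n) = x * j n * x⁻¹)
    (G' : Subgroup G)
    (hCG' : Subgroup.centralizer (i.range : Set G) ≤ G')
    (hGG' : i.range ⊔ G' = ⊤)
    (hrange : ε.range = εhat.range) :
    Subgroup.centralizer (j.range : Set Ghat) ≤ (G'.map ε).comap εhat ∧
    j.range ⊔ (G'.map ε).comap εhat = ⊤ ∧
    ((G'.map ε).comap εhat).comap j = G'.comap i :=
  butterfly_subgroup_properties_general hi hj hε hεhat hCG' hGG' hrange.ge
end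

section
/- Then N·C is a normal subgroup of G, N'·C is a normal subgroup of G', G' ∩ (N·C) = N'·C, and the inclusion G' ↪ G induces a group isomorphism G'/(N'·C) ≅ G/(N·C). (Consequently, any complete set of representatives of the cosets of N'·C_G(N) in G' is also a complete set of representatives of the cosets of N·C_G(N) in G.) -/
/-!
Let `C ≤ G'` be normal in `G'`, for instance `C = C_G(N)`. Both `N` and `G'` normalize `N·C`, so
`N·C` is normal in `G = N·G'`. The composite `G' → G → G/(N·C)` is onto because `N·G' = G`, and its
kernel `G' ∩ N·C` is `(G' ∩ N)·C` by Dedekind's modular law.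
-/

/-- The centralizer of a normal subgroup is normal. -/
instance centralizerNormal (G : Type) [Group G] (N : Subgroup G) [hN : N.Normal] :
    (Subgroup.centralizer (N : Set G)).Normal := by
  constructor
  intro c hc g
  rw [Subgroup.mem_centralizer_iff] at hc ⊢
  intro n hn
  have hn' : g⁻¹ * n * g⁻¹⁻¹ ∈ (N : Set G) := hN.conj_mem n hn g⁻¹
  have hcomm := hc _ hn'
  calc n * (g * c * g⁻¹) = g * ((g⁻¹ * n * g⁻¹⁻¹) * c) * g⁻¹ := by group
    _ = g * (c * (g⁻¹ * n * g⁻¹⁻¹)) * g⁻¹ := by rw [hcomm]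
    _ = (g * c * g⁻¹) * n := by group

/-- If `C_G(N) ≤ G'`, then `N'·C_G(N)` is normal in `G'`, where `N' = G' ⊓ N`. -/
theorem joinNormalInG' (G : Type) [Group G] (N : Subgroup G) [hN : N.Normal]
    (G' : Subgroup G) (hC : Subgroup.centralizer (N : Set G) ≤ G') :
    (((G' ⊓ N) ⊔ Subgroup.centralizer (N : Set G)).subgroupOf G').Normal := by
  constructor
  rintro ⟨x, hxG'⟩ hx ⟨g, hgG'⟩
  simp only [Subgroup.mem_subgroupOf] at hx ⊢
  have key : (G' ⊓ N) ⊔ Subgroup.centralizer (N : Set G) ≤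
      Subgroup.comap (MulAut.conj g).toMonoidHom
        ((G' ⊓ N) ⊔ Subgroup.centralizer (N : Set G)) := by
    refine sup_le ?_ ?_
    · intro n hn
      rcases Subgroup.mem_inf.mp hn with ⟨h1, h2⟩
      refine Subgroup.mem_comap.mpr (Subgroup.mem_sup_left (Subgroup.mem_inf.mpr ⟨?_, ?_⟩))
      · simpa [MulAut.conj_apply] using mul_mem (mul_mem hgG' h1) (inv_mem hgG')
      · simpa [MulAut.conj_apply] using hN.conj_mem n h2 g
    · intro c hc
      exact Subgroup.mem_comap.mpr
        (Subgroup.mem_sup_right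
          ((centralizerNormal G N).conj_mem c hc g))
  have hmem := key hx
  simpa [MulAut.conj_apply] using hmem

section

variable {G : Type*} [Group G] {N C H : Subgroup G} [N.Normal]

theorem inf_sup_assoc_of_le_of_normal (hC : C ≤ H) : (H ⊓ N) ⊔ C = H ⊓ (N ⊔ C) := by
  refine le_antisymm (sup_le (inf_le_inf_left H le_sup_left) (le_inf hC le_sup_right)) ?_
  rintro _ ⟨hx, hxNC⟩
  obtain ⟨n, hn, c, hc, rfl⟩ := Subgroup.mem_sup_of_normal_left.mp hxNC
  have hnH : n ∈ H := (H.mul_mem_cancel_right (hC hc)).mp hx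
  exact Subgroup.mul_mem_sup ⟨hnH, hn⟩ hc

theorem inf_sup_subgroupOf_of_le (hC : C ≤ H) :
    ((H ⊓ N) ⊔ C).subgroupOf H = (N ⊔ C).subgroupOf H := by
  rw [inf_sup_assoc_of_le_of_normal hC, Subgroup.inf_subgroupOf_left]

theorem le_normalizer_sup_of_normal_subgroupOf [(C.subgroupOf H).Normal] (hC : C ≤ H) :
    H ≤ Subgroup.normalizer ((N ⊔ C : Subgroup G) : Set G) :=
  calc
    H ≤ Subgroup.normalizer (C : Set G) := Subgroup.le_normalizer_of_normal_subgroupOf hC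
    _ ≤ Subgroup.normalizer ((C ⊔ N : Subgroup G) : Set G) :=
      Subgroup.normalizer_le_normalizer_sup_normal
    _ = Subgroup.normalizer ((N ⊔ C : Subgroup G) : Set G) := by rw [sup_comm]

theorem inf_sup_subgroupOf_normal [(C.subgroupOf H).Normal] (hC : C ≤ H) :
    (((H ⊓ N) ⊔ C).subgroupOf H).Normal := by
  rw [inf_sup_subgroupOf_of_le hC]
  exact Subgroup.normal_subgroupOf_of_le_normalizer (le_normalizer_sup_of_normal_subgroupOf hC)

theorem sup_normal_of_sup_eq_top [(C.subgroupOf H).Normal] (hC : C ≤ H) (hNH : N ⊔ H = ⊤) :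
    (N ⊔ C).Normal := by
  rw [← Subgroup.normalizer_eq_top_iff, eq_top_iff, ← hNH]
  exact sup_le (le_sup_left.trans Subgroup.le_normalizer)
    (le_normalizer_sup_of_normal_subgroupOf hC)

end

section

variable {G : Type*} [Group G] {H K : Subgroup G} [K.Normal]

theorem mk'_comp_subtype_surjective (hHK : Codisjoint H K) :
    Function.Surjective ((QuotientGroup.mk' K).comp H.subtype) := by
  rw [← MonoidHom.range_eq_top, MonoidHom.range_comp, H.range_subtype,
    ← QuotientGroup.range_mk' K, Subgroup.map_eq_range_iff, QuotientGroup.ker_mk']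
  exact hHK

theorem ker_mk'_comp_subtype : ((QuotientGroup.mk' K).comp H.subtype).ker = K.subgroupOf H := by
  rw [← MonoidHom.comap_ker, QuotientGroup.ker_mk']
  rfl

/-- The second isomorphism theorem when `H` and `K` generate `G`: the isomorphism
`H ⧸ (H ∩ K) ≃* G ⧸ K` induced by the inclusion of `H`. Unlike in
`QuotientGroup.quotientInfEquivProdNormalQuotient`, the target is a quotient of `G` itself. -/
noncomputable def quotientSubgroupOfEquivOfCodisjoint (hHK : Codisjoint H K) :
    H ⧸ K.subgroupOf H ≃* G ⧸ K :=
  QuotientGroup.liftEquiv _ (mk'_comp_subtype_surjective hHK) ker_mk'_comp_subtype.symm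

end

theorem join_centralizer_iso_general {G : Type*} [Group G] (N C G' : Subgroup G) [N.Normal]
    [(C.subgroupOf G').Normal] (hC : C ≤ G') (hGG' : N ⊔ G' = ⊤) :
    (N ⊔ C).Normal ∧
    (((G' ⊓ N) ⊔ C).subgroupOf G').Normal ∧
    G' ⊓ (N ⊔ C) = (G' ⊓ N) ⊔ C ∧
    ∃ φ : haveI := sup_normal_of_sup_eq_top hC hGG'
        haveI := inf_sup_subgroupOf_normal (N := N) hC
        (G' ⧸ ((G' ⊓ N) ⊔ C).subgroupOf G') ≃* (G ⧸ (N ⊔ C)),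
      ∀ g' : G', φ (QuotientGroup.mk g') = QuotientGroup.mk (g' : G) := by
  have hNC := sup_normal_of_sup_eq_top hC hGG'
  have hN'C := inf_sup_subgroupOf_normal (N := N) hC
  have hcodisj : Codisjoint G' (N ⊔ C) :=
    (codisjoint_iff.mpr hGG').symm.mono_right le_sup_left
  let φ := (QuotientGroup.quotientMulEquivOfEq (inf_sup_subgroupOf_of_le hC)).trans
    (quotientSubgroupOfEquivOfCodisjoint hcodisj)
  exact ⟨hNC, hN'C, (inf_sup_assoc_of_le_of_normal hC).symm, φ, fun _ => rfl⟩

/-- `N·C_G(N)` is normal in `G`, `N'·C_G(N)` is normal in `G'`,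
`G' ∩ (N·C_G(N)) = N'·C_G(N)`, and the inclusion `G' ↪ G` induces an isomorphism
`G'/(N'·C_G(N)) ≅ G/(N·C_G(N))`. -/
theorem join_centralizer_iso (G : Type) [Group G] (N : Subgroup G) [hN : N.Normal]
    (G' : Subgroup G) (hC : Subgroup.centralizer (N : Set G) ≤ G')
    (hGG' : N ⊔ G' = ⊤) :
    (N ⊔ Subgroup.centralizer (N : Set G)).Normal ∧
    (((G' ⊓ N) ⊔ Subgroup.centralizer (N : Set G)).subgroupOf G').Normal ∧
    G' ⊓ (N ⊔ Subgroup.centralizer (N : Set G)) =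
      (G' ⊓ N) ⊔ Subgroup.centralizer (N : Set G) ∧
    ∃ φ : haveI := joinNormalInG' G N G' hC
        (↥G' ⧸ ((G' ⊓ N) ⊔ Subgroup.centralizer (N : Set G)).subgroupOf G') ≃*
          (G ⧸ (N ⊔ Subgroup.centralizer (N : Set G))),
      ∀ g' : ↥G', φ (QuotientGroup.mk g') = QuotientGroup.mk (g' : G) := by
  exact join_centralizer_iso_general N (Subgroup.centralizer (N : Set G)) G' hC hGG'
end
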